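/- Let F₂ be the free group on two generators g₁, g₂. For every element w ∈ F₂ there exists a polynomial P ∈ ℤ[X, Y, Z] with integer coefficients, depending only on w, such that for every pair of matrices A, B ∈ SL₂(ℂ), if ρ: F₂ → SL₂(ℂ) is the homomorphism with ρ(g₁) = A and ρ(g₂) = B, then tr(ρ(w)) = P(tr A, tr B, tr(A·B)). -/

import Mathlib

open Matrix MatrixGroups

open MvPolynomial in
/-- The evaluation at the three traces. -/
noncomputable def traceEval (A B : Matrix (Fin 2) (Fin 2) ℂ) : MvPolynomial (Fin 3) ℤ →ₐ[ℤ] ℂ :=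
  MvPolynomial.aeval ![Matrix.trace A, Matrix.trace B, Matrix.trace (A * B)]

lemma traceEval_X0 (A B : Matrix (Fin 2) (Fin 2) ℂ) :
    traceEval A B (MvPolynomial.X 0) = A.trace := by simp [traceEval]
lemma traceEval_X1 (A B : Matrix (Fin 2) (Fin 2) ℂ) :
    traceEval A B (MvPolynomial.X 1) = B.trace := by simp [traceEval]
lemma traceEval_X2 (A B : Matrix (Fin 2) (Fin 2) ℂ) :
    traceEval A B (MvPolynomial.X 2) = (A * B).trace := by simp [traceEval]

/-- Combination of `1, A, B, AB`. -/
noncomputable def comb (A B : Matrix (Fin 2) (Fin 2) ℂ) (p q r s : ℂ) : Matrix (Fin 2) (Fin 2) ℂ :=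
  p • 1 + q • A + r • B + s • (A * B)

lemma sq_eq (A : Matrix (Fin 2) (Fin 2) ℂ) (h : A.det = 1) : A * A = A.trace • A - 1 := by
  rw [Matrix.det_fin_two] at h
  ext i j
  fin_cases i <;> fin_cases j <;>
    simp [Matrix.mul_apply, Fin.sum_univ_two, Matrix.trace_fin_two] <;>
    first | (ring1) | linear_combination -h

lemma swap_eq (A B : Matrix (Fin 2) (Fin 2) ℂ) : B * A =
    comb A B ((A * B).trace - A.trace * B.trace) B.trace A.trace (-1) := by
  ext i j
  fin_cases i <;> fin_cases j <;>
    simp [comb, Matrix.mul_apply, Fin.sum_univ_two, Matrix.trace_fin_two] <;> ring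

lemma comb_mul_B (A B : Matrix (Fin 2) (Fin 2) ℂ) (hB : B.det = 1) (p q r s : ℂ) :
    comb A B p q r s * B = comb A B (-r) (-s) (p + r * B.trace) (q + s * B.trace) := by
  have h := sq_eq B hB
  simp only [comb, add_mul, smul_mul_assoc, one_mul, mul_assoc, h, mul_sub, mul_smul_comm, mul_one]
  module

lemma comb_mul_A (A B : Matrix (Fin 2) (Fin 2) ℂ) (hA : A.det = 1) (p q r s : ℂ) :
    comb A B p q r s * A = comb A B
      (-q + r * ((A * B).trace - A.trace * B.trace) - s * B.trace)
      (p + q * A.trace + r * B.trace + s * (A * B).trace)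
      (r * A.trace + s) (-r) := by
  have h := sq_eq A hA
  have h2 := swap_eq A B
  have h3 : A * (A * B) = A.trace • (A * B) - B := by
    rw [← mul_assoc, h, sub_mul, smul_mul_assoc, one_mul]
  generalize A.trace = x at *
  generalize B.trace = y at *
  generalize (A * B).trace = z at *
  simp only [comb] at *
  simp only [add_mul, smul_mul_assoc, one_mul, mul_assoc, h, h2, h3, mul_add, mul_sub,
    mul_smul_comm, mul_one]
  module

lemma inv_eq (A : SL(2, ℂ)) : ((A⁻¹ : SL(2, ℂ)) : Matrix (Fin 2) (Fin 2) ℂ) =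
    (A : Matrix (Fin 2) (Fin 2) ℂ).trace • 1 - (A : Matrix (Fin 2) (Fin 2) ℂ) := by
  rw [Matrix.SpecialLinearGroup.coe_inv, Matrix.adjugate_fin_two]
  ext i j
  fin_cases i <;> fin_cases j <;> simp [Matrix.trace_fin_two]

/-- `w` is uniformly a polynomial combination of `1, A, B, AB`. -/
def IsComb (w : FreeGroup (Fin 2)) : Prop :=
  ∃ p q r s : MvPolynomial (Fin 3) ℤ, ∀ ρ : FreeGroup (Fin 2) →* SL(2, ℂ),
    ((ρ w : SL(2, ℂ)) : Matrix (Fin 2) (Fin 2) ℂ) =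
      comb (ρ (FreeGroup.of 0)) (ρ (FreeGroup.of 1))
        (traceEval (ρ (FreeGroup.of 0)) (ρ (FreeGroup.of 1)) p)
        (traceEval (ρ (FreeGroup.of 0)) (ρ (FreeGroup.of 1)) q)
        (traceEval (ρ (FreeGroup.of 0)) (ρ (FreeGroup.of 1)) r)
        (traceEval (ρ (FreeGroup.of 0)) (ρ (FreeGroup.of 1)) s)

lemma IsComb.one : IsComb 1 := ⟨1, 0, 0, 0, fun ρ => by simp [comb]⟩

open MvPolynomial in
lemma IsComb.mul_of {v : FreeGroup (Fin 2)} (hv : IsComb v) (i : Fin 2) :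
    IsComb (v * FreeGroup.of i) := by
  obtain ⟨p, q, r, s, h⟩ := hv
  fin_cases i
  · refine ⟨-q + r * (X 2 - X 0 * X 1) - s * X 1, p + q * X 0 + r * X 1 + s * X 2,
      r * X 0 + s, -r, fun ρ => ?_⟩
    have h1 := h ρ
    simp only [Fin.zero_eta, map_mul, Matrix.SpecialLinearGroup.coe_mul, h1,
      comb_mul_A _ _ (ρ (FreeGroup.of 0)).det_coe, map_add, map_sub, map_neg,
      traceEval_X0, traceEval_X1, traceEval_X2]
  · refine ⟨-r, -s, p + r * X 1, q + s * X 1, fun ρ => ?_⟩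
    have h1 := h ρ
    simp only [Fin.mk_one, map_mul, Matrix.SpecialLinearGroup.coe_mul, h1,
      comb_mul_B _ _ (ρ (FreeGroup.of 1)).det_coe, map_add, map_neg, traceEval_X1]

open MvPolynomial in
lemma IsComb.mul_of_inv {v : FreeGroup (Fin 2)} (hv : IsComb v) (i : Fin 2) :
    IsComb (v * (FreeGroup.of i)⁻¹) := by
  obtain ⟨p1, q1, r1, s1, h1⟩ := hv.mul_of i
  obtain ⟨p, q, r, s, h⟩ := hv
  obtain ⟨t, ht⟩ : ∃ t : MvPolynomial (Fin 3) ℤ, ∀ ρ : FreeGroup (Fin 2) →* SL(2, ℂ),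
      traceEval (ρ (FreeGroup.of 0)) (ρ (FreeGroup.of 1)) t =
        (ρ (FreeGroup.of i) : Matrix (Fin 2) (Fin 2) ℂ).trace := by
    fin_cases i
    · exact ⟨X 0, fun ρ => traceEval_X0 _ _⟩
    · exact ⟨X 1, fun ρ => traceEval_X1 _ _⟩
  refine ⟨t * p - p1, t * q - q1, t * r - r1, t * s - s1, fun ρ => ?_⟩
  have e1 := h1 ρ
  have e := h ρ
  rw [map_mul, Matrix.SpecialLinearGroup.coe_mul] at e1
  rw [map_mul, map_inv, Matrix.SpecialLinearGroup.coe_mul, inv_eq, mul_sub, e1, e]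
  simp only [map_sub, map_mul, ht, comb, mul_smul_comm, mul_one]
  module

lemma IsComb.mul_right (w : FreeGroup (Fin 2)) : ∀ v, IsComb v → IsComb (v * w) := by
  induction w using FreeGroup.induction_on with
  | C1 => intro v hv; simpa using hv
  | of i => exact fun v hv => hv.mul_of i
  | inv_of i _ => exact fun v hv => hv.mul_of_inv i
  | mul x y hx hy => intro v hv; rw [← mul_assoc]; exact hy _ (hx _ hv)

/-- For every word `w` in the free group on two generators there is an integer
polynomial `P ∈ ℤ[X, Y, Z]`, depending only on `w`, such that for every
homomorphism `ρ : F₂ → SL(2, ℂ)` sending the generators to `A` and `B`, one has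
`tr(ρ(w)) = P(tr A, tr B, tr(AB))`. -/
theorem exists_trace_polynomial (w : FreeGroup (Fin 2)) :
    ∃ P : MvPolynomial (Fin 3) ℤ,
      ∀ (A B : SL(2, ℂ)) (ρ : FreeGroup (Fin 2) →* SL(2, ℂ)),
        ρ (FreeGroup.of 0) = A → ρ (FreeGroup.of 1) = B →
        Matrix.trace ((ρ w : SL(2, ℂ)) : Matrix (Fin 2) (Fin 2) ℂ) =
          MvPolynomial.aeval
            ![Matrix.trace (A : Matrix (Fin 2) (Fin 2) ℂ),
              Matrix.trace (B : Matrix (Fin 2) (Fin 2) ℂ),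
              Matrix.trace ((A * B : SL(2, ℂ)) : Matrix (Fin 2) (Fin 2) ℂ)] P := by
  obtain ⟨p, q, r, s, h⟩ : IsComb w := by simpa using IsComb.mul_right w 1 IsComb.one
  refine ⟨2 * p + q * MvPolynomial.X 0 + r * MvPolynomial.X 1 + s * MvPolynomial.X 2, ?_⟩
  rintro A B ρ rfl rfl
  rw [h ρ, Matrix.SpecialLinearGroup.coe_mul]
  change _ = traceEval _ _ _
  simp only [comb, map_add, map_mul, traceEval_X0, traceEval_X1, traceEval_X2, Matrix.trace_add,
    Matrix.trace_smul, Matrix.trace_one, Fintype.card_fin, smul_eq_mul, map_ofNat]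
  push_cast
  ring
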